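/- Let H be a complex Hilbert space and S : dom(S) ⊆ H → H a densely defined skew-selfadjoint operator such that the embedding dom(S) ↪ H is compact, i.e. every sequence (xₙ) in dom(S) with (‖xₙ‖) and (‖S xₙ‖) bounded has a subsequence converging in H. Then ran(S) is closed in H and H decomposes orthogonally as H = ran(S) ⊕ ker(S). -/

import Mathlib

noncomputable section

open LinearPMap
open scoped ComplexInnerProductSpace

/-- The range of a partially defined linear operator, as a submodule. -/
def ranSub {E F : Type*} [NormedAddCommGroup E] [NormedAddCommGroup F]
    [InnerProductSpace ℂ E] [InnerProductSpace ℂ F] (S : E →ₗ.[ℂ] F) : Submodule ℂ F :=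
  LinearMap.range S.toFun

/-- The kernel of a partially defined linear operator, as a submodule of the ambient space. -/
def kerSub {E F : Type*} [NormedAddCommGroup E] [NormedAddCommGroup F]
    [InnerProductSpace ℂ E] [InnerProductSpace ℂ F] (S : E →ₗ.[ℂ] F) : Submodule ℂ E :=
  (LinearMap.ker S.toFun).map S.domain.subtype

/-!
Among the preimages of a vector `w` under a closed operator `T`, pick one whose norm is minimal up
to a factor `2`; in a Hilbert space this plays the role of the preimage orthogonal to `ker T`.
Compactness bounds such preimages by `C * ‖w‖`: otherwise a rescaled sequence of them has norms
bounded below while its images tend to `0`; a limit point lies in `ker T`, and subtracting it from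
the sequence gives preimages of the same images with norms tending to `0`. If now `wₙ → w` with
`wₙ ∈ ran T`, the preimages chosen for `wₙ` are bounded, so they have a limit point, which `T` maps
to `w`. Hence `ran T` is closed, and the decomposition follows from `(ran T)ᗮ = ker T†`.
-/

open Filter Topology
open scoped NNReal

section NormedField

variable {𝕜 E F : Type*} [NormedField 𝕜] [NormedAddCommGroup E] [NormedSpace 𝕜 E]
  [NormedAddCommGroup F] [NormedSpace 𝕜 F] {T : E →ₗ.[𝕜] F}

/-- The domain of `T`, with the graph norm, embeds compactly into the ambient space: every sequence
bounded in the graph norm has a subsequence converging in `E`. -/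
def HasCompactDomainEmbedding (T : E →ₗ.[𝕜] F) : Prop :=
  ∀ x : ℕ → T.domain, (∃ C, ∀ n, ‖x n‖ ≤ C) → (∃ C, ∀ n, ‖T (x n)‖ ≤ C) →
    ∃ φ : ℕ → ℕ, StrictMono φ ∧ ∃ l : E, Tendsto (fun n => (x (φ n) : E)) atTop (𝓝 l)

/-- `x` has the least norm, up to a factor `2`, among all vectors with the same image under `T`.
This stands in for orthogonality to the kernel, which is not available in a normed space. -/
def IsAlmostMinimalPreimage (T : E →ₗ.[𝕜] F) (x : T.domain) : Prop :=
  ∀ y : T.domain, T y = T x → ‖x‖ ≤ 2 * ‖y‖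

theorem exists_mem_norm_le_two_mul_norm {V : Type*} [SeminormedAddCommGroup V] {s : Set V}
    (hs : _root_.IsClosed s) (hne : s.Nonempty) : ∃ x ∈ s, ∀ y ∈ s, ‖x‖ ≤ 2 * ‖y‖ := by
  by_cases h0 : (0 : V) ∈ s
  · exact ⟨0, h0, fun y _ => by simp⟩
  · have hpos : 0 < Metric.infDist 0 s := (hs.notMem_iff_infDist_pos hne).1 h0
    obtain ⟨x, hx, hlt⟩ := (Metric.infDist_lt_iff hne).1 (lt_two_mul_self hpos)
    refine ⟨x, hx, fun y hy => ?_⟩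
    calc ‖x‖ = dist 0 x := (dist_zero_left x).symm
      _ ≤ 2 * Metric.infDist 0 s := hlt.le
      _ ≤ 2 * dist 0 y := by gcongr; exact Metric.infDist_le_dist_of_mem hy
      _ = 2 * ‖y‖ := by rw [dist_zero_left]

theorem exists_isAlmostMinimalPreimage (hT : T.IsClosed) (x : T.domain) :
    ∃ y : T.domain, T y = T x ∧ IsAlmostMinimalPreimage T y := by
  have hfiber : _root_.IsClosed {z : E | (z, T x) ∈ T.graph} :=
    _root_.IsClosed.preimage (f := fun z : E => (z, T x)) (by fun_prop) hT
  obtain ⟨y, hy, hmin⟩ := exists_mem_norm_le_two_mul_norm hfiber ⟨x, T.mem_graph x⟩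
  obtain ⟨y, rfl, hyx⟩ := T.mem_graph_iff.1 hy
  exact ⟨y, hyx, fun z hz => hmin z (T.mem_graph_iff.2 ⟨z, rfl, hz.trans hyx⟩)⟩

theorem IsAlmostMinimalPreimage.smul {x : T.domain} (hx : IsAlmostMinimalPreimage T x) (c : 𝕜) :
    IsAlmostMinimalPreimage T (c • x) := by
  intro y hy
  rcases eq_or_ne c 0 with rfl | hc
  · simp
  · have hinv : T (c⁻¹ • y) = T x := by rw [T.map_smul, hy, T.map_smul, inv_smul_smul₀ hc]
    calc ‖c • x‖ = ‖c‖ * ‖x‖ := norm_smul c x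
      _ ≤ ‖c‖ * (2 * ‖c⁻¹ • y‖) := by gcongr; exact hx _ hinv
      _ = 2 * ‖c • c⁻¹ • y‖ := by rw [norm_smul c (c⁻¹ • y)]; ring
      _ = 2 * ‖y‖ := by rw [smul_inv_smul₀ hc]

theorem exists_apply_eq_of_tendsto (hT : T.IsClosed) {x : ℕ → T.domain} {l : E} {w : F}
    (hx : Tendsto (fun n => (x n : E)) atTop (𝓝 l)) (hw : Tendsto (fun n => T (x n)) atTop (𝓝 w)) :
    ∃ z : T.domain, (z : E) = l ∧ T z = w :=
  T.mem_graph_iff.1 <|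
    hT.mem_of_tendsto (hx.prodMk_nhds hw) (Eventually.of_forall fun n => T.mem_graph (x n))

theorem exists_subseq_tendsto_zero (hT : T.IsClosed) (hcomp : HasCompactDomainEmbedding T)
    {u : ℕ → T.domain} (hmin : ∀ n, IsAlmostMinimalPreimage T (u n))
    (hbdd : ∃ C, ∀ n, ‖u n‖ ≤ C) (hTu : Tendsto (fun n => T (u n)) atTop (𝓝 0)) :
    ∃ φ : ℕ → ℕ, StrictMono φ ∧ Tendsto (fun n => u (φ n)) atTop (𝓝 0) := by
  obtain ⟨B, hB⟩ := hTu.norm.bddAbove_range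
  obtain ⟨φ, hφ, l, hl⟩ := hcomp u hbdd ⟨B, fun n => hB ⟨n, rfl⟩⟩
  obtain ⟨z, rfl, hz⟩ := exists_apply_eq_of_tendsto hT hl (hTu.comp hφ.tendsto_atTop)
  have hsub : ∀ n, ‖u (φ n)‖ ≤ 2 * ‖u (φ n) - z‖ := fun n =>
    hmin (φ n) _ (by rw [T.map_sub, hz, sub_zero])
  have hdist : Tendsto (fun n => 2 * ‖u (φ n) - z‖) atTop (𝓝 0) := by
    simpa using (tendsto_iff_norm_sub_tendsto_zero.1 (tendsto_subtype_rng.2 hl)).const_mul 2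
  exact ⟨φ, hφ, squeeze_zero_norm hsub hdist⟩

end NormedField

section NontriviallyNormedField

variable {𝕜 E F : Type*} [NontriviallyNormedField 𝕜] [NormedAddCommGroup E] [NormedSpace 𝕜 E]
  [NormedAddCommGroup F] [NormedSpace 𝕜 F] {T : E →ₗ.[𝕜] F}

theorem exists_norm_le_mul_norm_apply (hT : T.IsClosed) (hcomp : HasCompactDomainEmbedding T) :
    ∃ C : ℝ≥0, ∀ x : T.domain, IsAlmostMinimalPreimage T x → ‖x‖ ≤ C * ‖T x‖ := by
  by_contra! hunbdd
  obtain ⟨c, hc⟩ := NormedField.exists_one_lt_norm 𝕜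
  have hrescaled : ∀ n : ℕ, ∃ u : T.domain, IsAlmostMinimalPreimage T u ∧
      1 / ‖c‖ ≤ ‖u‖ ∧ ‖u‖ ≤ 1 ∧ ‖T u‖ ≤ 1 / (n + 1 : ℝ) := fun n => by
    obtain ⟨x, hx, hlt⟩ := hunbdd (n + 1)
    have hx0 : x ≠ 0 := norm_pos_iff.1 (lt_of_le_of_lt (by positivity) hlt)
    obtain ⟨d, -, hupper, hlower, -⟩ := rescale_to_shell hc one_pos hx0
    refine ⟨d • x, hx.smul d, hlower, hupper.le, ?_⟩
    rw [le_div_iff₀' (by positivity)]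
    calc (n + 1 : ℝ) * ‖T (d • x)‖ = ‖d‖ * ((n + 1) * ‖T x‖) := by
          rw [T.map_smul, norm_smul]; ring
      _ ≤ ‖d‖ * ‖x‖ := by gcongr; exact_mod_cast hlt.le
      _ = ‖d • x‖ := (norm_smul d x).symm
      _ ≤ 1 := hupper.le
  choose u hmin hlower hupper hTu using hrescaled
  obtain ⟨φ, -, hu⟩ := exists_subseq_tendsto_zero hT hcomp hmin ⟨1, hupper⟩
    (squeeze_zero_norm hTu tendsto_one_div_add_atTop_nhds_zero_nat)
  have hnonpos : 1 / ‖c‖ ≤ 0 := ge_of_tendsto' (by simpa using hu.norm) fun n => hlower (φ n)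
  exact hnonpos.not_gt (one_div_pos.2 (zero_lt_one.trans hc))

theorem isClosed_range_of_hasCompactDomainEmbedding (hT : T.IsClosed)
    (hcomp : HasCompactDomainEmbedding T) :
    _root_.IsClosed (LinearMap.range T.toFun : Set F) := by
  obtain ⟨C, hC⟩ := exists_norm_le_mul_norm_apply hT hcomp
  refine isSeqClosed_iff_isClosed.1 fun w l hw hl => ?_
  have hpre : ∀ n, ∃ x : T.domain, T x = w n ∧ IsAlmostMinimalPreimage T x := fun n => by
    obtain ⟨x, hx⟩ := hw n
    exact hx ▸ exists_isAlmostMinimalPreimage hT x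
  choose x hTx hmin using hpre
  obtain ⟨B, hB⟩ := hl.norm.bddAbove_range
  have hTbdd : ∀ n, ‖T (x n)‖ ≤ B := fun n => hTx n ▸ hB ⟨n, rfl⟩
  have hbdd : ∀ n, ‖x n‖ ≤ C * B := fun n => (hC _ (hmin n)).trans (by gcongr; exact hTbdd n)
  obtain ⟨φ, hφ, y, hy⟩ := hcomp x ⟨_, hbdd⟩ ⟨_, hTbdd⟩
  have hTy : Tendsto (fun n => T (x (φ n))) atTop (𝓝 l) := by
    simpa only [hTx, Function.comp_def] using hl.comp hφ.tendsto_atTop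
  obtain ⟨z, -, hz⟩ := exists_apply_eq_of_tendsto hT hy hTy
  exact ⟨z, hz⟩

end NontriviallyNormedField

section InnerProductSpace

variable {𝕜 E F : Type*} [RCLike 𝕜] [NormedAddCommGroup E] [InnerProductSpace 𝕜 E]
  [CompleteSpace E] [NormedAddCommGroup F] [InnerProductSpace 𝕜 F] {T : E →ₗ.[𝕜] F}

theorem map_subtype_ker_adjoint (hdense : Dense (T.domain : Set E)) :
    (LinearMap.ker T†.toFun).map T†.domain.subtype = (LinearMap.range T.toFun)ᗮ := by
  ext y
  rw [Submodule.mem_orthogonal']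
  constructor
  · rintro ⟨z, hz, rfl⟩ _ ⟨x, rfl⟩
    have hz0 : T† z = 0 := hz
    have hadj := adjoint_isFormalAdjoint hdense z x
    rw [hz0, inner_zero_left] at hadj
    exact hadj.symm
  · intro hy
    have hzero : ∀ x : T.domain, inner 𝕜 (0 : E) x = inner 𝕜 y (T x) := fun x => by
      rw [inner_zero_left]
      exact (hy _ ⟨x, rfl⟩).symm
    have hmem : y ∈ T†.domain := mem_adjoint_domain_of_exists y ⟨0, hzero⟩
    exact ⟨⟨y, hmem⟩, adjoint_apply_eq hdense ⟨y, hmem⟩ hzero, rfl⟩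

theorem closedRange_and_helmholtz_general [CompleteSpace F] (hdense : Dense (T.domain : Set E))
    (hclosed : T.IsClosed) (hcomp : HasCompactDomainEmbedding T) :
    _root_.IsClosed (LinearMap.range T.toFun : Set F) ∧
      (∀ u ∈ LinearMap.range T.toFun, ∀ v ∈ (LinearMap.ker T†.toFun).map T†.domain.subtype,
        inner 𝕜 u v = 0) ∧
      LinearMap.range T.toFun ⊔ (LinearMap.ker T†.toFun).map T†.domain.subtype = ⊤ := by
  have hrange := isClosed_range_of_hasCompactDomainEmbedding hclosed hcomp
  have : CompleteSpace (LinearMap.range T.toFun) := hrange.completeSpace_coe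
  rw [map_subtype_ker_adjoint hdense]
  exact ⟨hrange, fun u hu v hv => Submodule.inner_right_of_mem_orthogonal hu hv,
    Submodule.sup_orthogonal_of_hasOrthogonalProjection⟩

end InnerProductSpace

theorem linearPMap_isClosed_neg {R E F : Type*} [CommRing R] [AddCommGroup E] [AddCommGroup F]
    [Module R E] [Module R F] [TopologicalSpace E] [TopologicalSpace F] [ContinuousNeg F]
    {f : E →ₗ.[R] F} (hf : f.IsClosed) : (-f).IsClosed := by
  have hgraph : ((-f).graph : Set (E × F)) = Prod.map id Neg.neg ⁻¹' (f.graph : Set (E × F)) := by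
    ext p
    simp [mem_graph_iff, neg_eq_iff_eq_neg]
  rw [LinearPMap.IsClosed, hgraph]
  exact _root_.IsClosed.preimage (by fun_prop) hf

theorem kerSub_neg {E F : Type*} [NormedAddCommGroup E] [NormedAddCommGroup F]
    [InnerProductSpace ℂ E] [InnerProductSpace ℂ F] (S : E →ₗ.[ℂ] F) : kerSub (-S) = kerSub S := by
  ext x
  simp [kerSub]

theorem isClosed_of_adjoint_eq_neg {𝕜 E : Type*} [RCLike 𝕜] [NormedAddCommGroup E]
    [InnerProductSpace 𝕜 E] [CompleteSpace E] {S : E →ₗ.[𝕜] E}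
    (hdense : Dense (S.domain : Set E)) (hskew : S† = -S) : S.IsClosed :=
  neg_neg S ▸ linearPMap_isClosed_neg (hskew ▸ adjoint_isClosed hdense)

/-- if `S` is a densely defined skew-selfadjoint operator on a complex Hilbert
space `H` with compact embedding `dom S ↪ H`, then `ran S` is closed and
`H = ran S ⊕ ker S` orthogonally. -/
theorem closedRange_and_helmholtz {H : Type*} [NormedAddCommGroup H] [InnerProductSpace ℂ H]
    [CompleteSpace H] (S : H →ₗ.[ℂ] H)
    (hdense : Dense (S.domain : Set H)) (hskew : S.adjoint = -S)
    (hcomp : ∀ (x : ℕ → H) (hx : ∀ n, x n ∈ S.domain),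
      (∃ C, ∀ n, ‖x n‖ ≤ C) → (∃ C, ∀ n, ‖S ⟨x n, hx n⟩‖ ≤ C) →
      ∃ φ : ℕ → ℕ, StrictMono φ ∧
        ∃ l : H, Filter.Tendsto (fun n => x (φ n)) Filter.atTop (nhds l)) :
    IsClosed (ranSub S : Set H) ∧
      (∀ u ∈ ranSub S, ∀ v ∈ kerSub S, ⟪u, v⟫ = 0) ∧
      ranSub S ⊔ kerSub S = ⊤ := by
  have hker : kerSub S† = kerSub S := by rw [hskew, kerSub_neg]
  exact hker ▸ closedRange_and_helmholtz_general hdense (isClosed_of_adjoint_eq_neg hdense hskew)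
    fun x => hcomp (fun n => x n) fun n => (x n).2
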